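/- Let n ∈ ℕ, let H: ℝ^{2n} → ℝ be differentiable, and let L ∈ ℝ be such that H_L(x) := H(x) + (1/2)L·|x|² is convex on ℝ^{2n}. Define the Fenchel conjugate H_L*(y) = sup_{z ∈ ℝ^{2n}} ((z, y) − H_L(z)). If x: ℝ → ℝ^{2n} is differentiable and satisfies ẋ(t) = J∇H(x(t)) for all t, then for every t the supremum defining H_L*(−Jẋ(t) + L·x(t)) is attained at x(t) and (1/2)(Jẋ(t) − L·x(t), x(t)) + H_L*(−Jẋ(t) + L·x(t)) = −(1/2)(Jẋ(t), x(t)) − H(x(t)); in particular the left-hand side is independent of L. -/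

import Mathlib

open RealInnerProductSpace

/-- The standard symplectic matrix `J = [[0, -I_n], [I_n, 0]]` acting on
`ℝ^{2n}`. -/
noncomputable def symplJ (n : ℕ) (x : EuclideanSpace ℝ (Fin (2 * n))) :
    EuclideanSpace ℝ (Fin (2 * n)) :=
  WithLp.toLp 2 fun i => if h : (i : ℕ) < n then -x ⟨(i : ℕ) + n, by omega⟩
           else x ⟨(i : ℕ) - n, by have := i.isLt; omega⟩

theorem symplJ_symplJ_aux (n : ℕ) (g : EuclideanSpace ℝ (Fin (2 * n))) :
    symplJ n (symplJ n g) = -g := by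
  ext i
  have hi := i.isLt
  by_cases h : (i : ℕ) < n
  · simp [symplJ, h]
  · have h1 : (i : ℕ) - n < n := by omega
    have h2 : (i : ℕ) - n + n = i := by omega
    simp [symplJ, h, h1, h2]

/-- Proposition 2.8 (computation (2.7)): along a solution of `ẋ = J∇H(x)`, the
supremum defining the Fenchel dual `H_L*(-Jẋ + Lx)` is attained at `x(t)` and
the integrand of the dual action functional is independent of `L`. -/
theorem dual_action_integrand_independent_of_L (n : ℕ)
    (H : EuclideanSpace ℝ (Fin (2 * n)) → ℝ) (hH : Differentiable ℝ H)
    (L : ℝ)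
    (hconv : ConvexOn ℝ Set.univ (fun z => H z + (1/2) * L * ‖z‖ ^ 2))
    (x : ℝ → EuclideanSpace ℝ (Fin (2 * n)))
    (hx : ∀ t, HasDerivAt x (symplJ n (gradient H (x t))) t) :
    ∀ t : ℝ, ∀ v y : EuclideanSpace ℝ (Fin (2 * n)),
      v = symplJ n (gradient H (x t)) →
      y = -(symplJ n v) + L • x t →
      IsGreatest {r : ℝ | ∃ z, r = ⟪z, y⟫ - (H z + (1/2) * L * ‖z‖ ^ 2)}
        (⟪x t, y⟫ - (H (x t) + (1/2) * L * ‖x t‖ ^ 2)) ∧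
      (1/2) * ⟪symplJ n v - L • x t, x t⟫ +
          (⟪x t, y⟫ - (H (x t) + (1/2) * L * ‖x t‖ ^ 2)) =
        -((1/2) * ⟪symplJ n v, x t⟫) - H (x t) := by
  intro t v y hv hy
  have hJ : symplJ n v = -gradient H (x t) := by rw [hv, symplJ_symplJ_aux]
  refine ⟨⟨⟨x t, rfl⟩, ?_⟩, ?_⟩
  · rintro r ⟨z, rfl⟩
    rw [hJ, neg_neg] at hy
    set p := x t with hp
    have hl : HasDerivAt (fun s : ℝ => p + s • (z - p)) (z - p) 0 := by
      simpa using ((hasDerivAt_id (0 : ℝ)).smul_const (z - p)).const_add p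
    have hg : HasFDerivAt H (InnerProductSpace.toDual ℝ _ (gradient H p)) (p + (0 : ℝ) • (z - p)) := by
      simpa using (hH p).hasGradientAt.hasFDerivAt
    have h1 := hg.comp_hasDerivAt (0 : ℝ) hl
    have h2 := hl.norm_sq
    have h3 := h1.add (h2.const_mul ((1/2) * L))
    have hc : ConvexOn ℝ Set.univ (fun s : ℝ => H (p + s • (z - p)) + (1/2) * L * ‖p + s • (z - p)‖ ^ 2) := by
      have := hconv.comp_affineMap (AffineMap.lineMap p z : ℝ →ᵃ[ℝ] _)
      simpa [Function.comp_def, AffineMap.lineMap_apply, add_comm] using this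
    have h4 := hc.le_slope_of_hasDerivAt (Set.mem_univ 0) (Set.mem_univ 1) one_pos h3
    simp [slope_def_field] at h4
    rw [hy]
    simp only [inner_add_right, inner_smul_right, inner_sub_right, real_inner_self_eq_norm_sq] at h4 ⊢
    have hw : ∀ w, (fderiv ℝ H p) w = ⟪w, gradient H p⟫ := by
      intro w
      rw [real_inner_comm]
      simp [gradient]
    rw [hw, hw, real_inner_comm] at h4
    simp only [real_inner_comm p z] at *
    linarith [real_inner_comm p z, real_inner_comm z (gradient H p)]
  · rw [hy]
    simp only [inner_add_right, inner_sub_left, inner_neg_right, inner_smul_right, inner_smul_left, real_inner_self_eq_norm_sq]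
    rw [real_inner_comm (symplJ n v) (x t)]
    simp
    ring
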